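/- Let d ≥ 2 be an integer and γ ∈ (1/2, (d+3)/6), and set b* = (d+3)/2 − 3γ (so b* > 0) and C̄_{d,γ} = (2/√π)·Γ(2γ−1)Γ((d+1)/2 − γ)² / (Γ((d−1)/2)·Γ((d+2−4γ)/2)·Γ((2γ−1)/2)²). Then for every ξ ∈ ℝ^d \ {0} and every real b > 0, ∫_{ℝ^d} (|η|/|ξ|)^b H(η|ξ) dη ≥ ∫_{ℝ^d} (|η|/|ξ|)^{b*} H(η|ξ) dη, and moreover ∫_{ℝ^d} (|η|/|ξ|)^{b*} H(η|ξ) dη = C̄_{d,γ} ∫_0^π ∫_0^{π−φ₁} (sin φ₂ · sin(φ₁+φ₂))^{(d−1)/2 − γ} · sin^{2γ−2}(φ₁) dφ₂ dφ₁. -/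

import Mathlib

open MeasureTheory Set

/-- The constant `c_{d,γ}` of the standard majorizing kernel. -/
noncomputable def cdg (d : ℕ) (γ : ℝ) : ℝ :=
  Real.pi ^ (-(d : ℝ)/2) * Real.Gamma (2*γ - 1) * (Real.Gamma (((d : ℝ) + 1 - 2*γ)/2))^2 /
    (Real.Gamma (((d : ℝ) + 2 - 4*γ)/2) * (Real.Gamma ((2*γ - 1)/2))^2)

/-- `H(η|ξ) = c_{d,γ} |η|^{2γ−d−1} |ξ−η|^{2γ−d−1} |ξ|^{d+2−4γ}`. -/
noncomputable def Hker (d : ℕ) (γ : ℝ) (η ξ : EuclideanSpace ℝ (Fin d)) : ℝ :=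
  cdg d γ * ‖η‖ ^ (2*γ - (d : ℝ) - 1) * ‖ξ - η‖ ^ (2*γ - (d : ℝ) - 1)
    * ‖ξ‖ ^ ((d : ℝ) + 2 - 4*γ)

/-- The constant `C̄_{d,γ}`. -/
noncomputable def Cbar (d : ℕ) (γ : ℝ) : ℝ :=
  2 / Real.sqrt Real.pi * Real.Gamma (2*γ - 1) * (Real.Gamma (((d : ℝ) + 1)/2 - γ))^2 /
    (Real.Gamma (((d : ℝ) - 1)/2) * Real.Gamma (((d : ℝ) + 2 - 4*γ)/2)
      * (Real.Gamma ((2*γ - 1)/2))^2)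

/-!
The integrand depends on `η` only through the sides `‖η‖` and `‖ξ - η‖` of the triangle `0`, `ξ`,
`η`. Taking the angles `α` at `0` and `β` at `ξ` as coordinates, the law of sines turns the `b`-th
moment into `C̄ ∬ sin α ^ (2γ - 2) * sin β ^ u * sin (α + β) ^ v` over `α, β > 0` with `α + β < π`,
where `u = b + 2γ - 2` and `v = d + 1 - 4γ - b`, so that `u + v` does not depend on `b`. The
reflection `β ↦ π - α - β` exchanges `u` and `v`; applied to the average of the two resulting forms
of the integral, AM-GM shows that it is smallest at `u = v`, that is, at `b = (d + 3) / 2 - 3γ`.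
-/

open Module
open scoped Real ENNReal

section CylindricalCoordinates

/-- The surface area `2 π^{n/2} / Γ(n/2)` of the unit sphere in `n`-dimensional Euclidean space.
The dimension is a real number so that it can be shifted without truncation. -/
noncomputable def unitSphereArea (n : ℝ) : ℝ :=
  2 * π ^ (n / 2) / Real.Gamma (n / 2)

theorem unitSphereArea_pos {n : ℝ} (hn : 0 < n) : 0 < unitSphereArea n := by
  have := Real.Gamma_pos_of_pos (half_pos hn)
  unfold unitSphereArea
  positivity

theorem lintegral_fun_norm_addHaar {E : Type*} [NormedAddCommGroup E] [NormedSpace ℝ E]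
    [MeasurableSpace E] [BorelSpace E] [FiniteDimensional ℝ E] [Nontrivial E]
    (μ : Measure E) [μ.IsAddHaarMeasure] {f : ℝ → ℝ≥0∞} (hf : Measurable f) :
    ∫⁻ x, f ‖x‖ ∂μ =
      μ.toSphere univ * ∫⁻ y in Ioi (0 : ℝ), ENNReal.ofReal (y ^ (finrank ℝ E - 1)) * f y :=
  calc
    ∫⁻ x, f ‖x‖ ∂μ = ∫⁻ x : ({0}ᶜ : Set E), f ‖x.1‖ ∂μ.comap (↑) := by
      rw [lintegral_subtype_comap (measurableSet_singleton _).compl fun x ↦ f ‖x‖,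
        restrict_compl_singleton]
    _ = ∫⁻ x, f x.2 ∂μ.toSphere.prod (.volumeIoiPow (finrank ℝ E - 1)) := by
      simpa using μ.measurePreserving_homeomorphUnitSphereProd.lintegral_comp_emb
        (Homeomorph.measurableEmbedding _) (f ∘ Subtype.val ∘ Prod.snd)
    _ = μ.toSphere univ * ∫⁻ x : Ioi (0 : ℝ), f x ∂.volumeIoiPow (finrank ℝ E - 1) := by
      rw [lintegral_prod _ (by fun_prop)]
      simp [mul_comm]
    _ = _ := by
      rw [Measure.volumeIoiPow,
        lintegral_withDensity_eq_lintegral_mul _ (by fun_prop) (by fun_prop),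
        ← lintegral_subtype_comap measurableSet_Ioi]
      rfl

variable {E : Type*} [NormedAddCommGroup E] [InnerProductSpace ℝ E]

theorem norm_smul_add_orthogonal {e : E} (he : ‖e‖ = 1) (x : ℝ) (w : (ℝ ∙ e)ᗮ) :
    ‖x • e + (w : E)‖ = √(x ^ 2 + ‖w‖ ^ 2) := by
  have horth : inner ℝ (x • e) (w : E) = 0 :=
    Submodule.inner_right_of_mem_orthogonal
      (Submodule.smul_mem _ _ (Submodule.mem_span_singleton_self e)) w.2
  rw [eq_comm, Real.sqrt_eq_iff_eq_sq (by positivity) (norm_nonneg _), norm_add_sq_real, horth]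
  simp [norm_smul, he]

variable [FiniteDimensional ℝ E] [MeasurableSpace E] [BorelSpace E]

theorem toSphere_volume_univ [Nontrivial E] :
    (volume : Measure E).toSphere univ = ENNReal.ofReal (unitSphereArea (finrank ℝ E)) := by
  have hn : (0 : ℝ) < finrank ℝ E := by exact_mod_cast finrank_pos (R := ℝ) (M := E)
  have := (Real.Gamma_pos_of_pos (half_pos hn)).ne'
  rw [Measure.toSphere_apply_univ, InnerProductSpace.volume_ball, ENNReal.ofReal_one, one_pow,
    one_mul, ← ENNReal.ofReal_natCast, ← ENNReal.ofReal_mul hn.le, unitSphereArea,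
    Real.Gamma_add_one (half_pos hn).ne', Real.sqrt_eq_rpow, ← Real.rpow_mul_natCast Real.pi_nonneg,
    one_div_mul_eq_div]
  field_simp

theorem measurePreserving_smul_add_orthogonal {e : E} (he : ‖e‖ = 1) :
    MeasurePreserving fun p : ℝ × (ℝ ∙ e)ᗮ ↦ p.1 • e + (p.2 : E) := by
  have hline : MeasurePreserving
      (Prod.map (LinearIsometryEquiv.toSpanUnitSingleton (𝕜 := ℝ) e he) (id : (ℝ ∙ e)ᗮ → _)) :=
    (LinearIsometryEquiv.measurePreserving _).prod (MeasurePreserving.id _)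
  convert (ℝ ∙ e).orthogonalDecomposition.symm.measurePreserving.comp
    ((WithLp.volume_preserving_toLp (ℝ ∙ e) (ℝ ∙ e)ᗮ).comp hline) using 2 with p
  simp

theorem lintegral_norm_norm_sub_eq_upperHalfPlane {n : ℕ} (hE : finrank ℝ E = n + 2) {ξ : E}
    (hξ : ξ ≠ 0) {F : ℝ × ℝ → ℝ≥0∞} (hF : Measurable F) :
    ∫⁻ η, F (‖η‖, ‖ξ - η‖) = ENNReal.ofReal (unitSphereArea (n + 1)) *
      ∫⁻ x : ℝ, ∫⁻ y in Ioi (0 : ℝ), ENNReal.ofReal (y ^ n) *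
        F (√(x ^ 2 + y ^ 2), √((‖ξ‖ - x) ^ 2 + y ^ 2)) := by
  set e : E := (‖ξ‖⁻¹ : ℝ) • ξ
  have he : ‖e‖ = 1 := norm_smul_inv_norm (𝕜 := ℝ) hξ
  have hξe : ξ = ‖ξ‖ • e := (smul_inv_smul₀ (norm_ne_zero_iff.2 hξ) ξ).symm
  have hfin : finrank ℝ (ℝ ∙ e)ᗮ = n + 1 :=
    have : Fact (finrank ℝ E = n + 1 + 1) := ⟨hE⟩
    Submodule.finrank_orthogonal_span_singleton (norm_ne_zero_iff.1 (he ▸ one_ne_zero))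
  have : Nontrivial (ℝ ∙ e)ᗮ := nontrivial_of_finrank_pos (R := ℝ) (by omega)
  have hdist (x : ℝ) (w : (ℝ ∙ e)ᗮ) :
      ‖ξ - (x • e + (w : E))‖ = √((‖ξ‖ - x) ^ 2 + ‖w‖ ^ 2) := by
    have : ξ - (x • e + (w : E)) = (‖ξ‖ - x) • e + ((-w : (ℝ ∙ e)ᗮ) : E) := by
      conv_lhs => rw [hξe]
      push_cast
      module
    rw [this, norm_smul_add_orthogonal he, norm_neg]
  rw [← (measurePreserving_smul_add_orthogonal he).lintegral_comp (by fun_prop),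
    Measure.volume_eq_prod, lintegral_prod _ (by fun_prop),
    ← lintegral_const_mul' _ _ ENNReal.ofReal_ne_top]
  refine lintegral_congr fun x ↦ ?_
  simp only [norm_smul_add_orthogonal he, hdist]
  rw [lintegral_fun_norm_addHaar volume
    (f := fun y ↦ F (√(x ^ 2 + y ^ 2), √((‖ξ‖ - x) ^ 2 + y ^ 2))) (by fun_prop),
    toSphere_volume_univ, hfin]
  push_cast
  rfl

end CylindricalCoordinates

section TriangleCoordinates

theorem lintegral_upperHalfPlane_eq_polar {f : ℝ × ℝ → ℝ≥0∞} (hf : Measurable f) :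
    ∫⁻ x : ℝ, ∫⁻ y in Ioi (0 : ℝ), f (x, y) =
      ∫⁻ α in Ioo 0 π, ∫⁻ ρ in Ioi (0 : ℝ),
        ENNReal.ofReal ρ * f (ρ * Real.cos α, ρ * Real.sin α) := by
  have hupper : MeasurableSet {p : ℝ × ℝ | 0 < p.2} :=
    measurableSet_lt measurable_const measurable_snd
  have htarget : {p : ℝ × ℝ | 0 < p.2} ∩ polarCoord.target = Ioi 0 ×ˢ Ioo 0 π := by
    ext ⟨ρ, α⟩
    simp only [polarCoord_target, mem_inter_iff, mem_ofPred_eq, mem_prod, mem_Ioi, mem_Ioo]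
    constructor
    · tauto
    · rintro ⟨hρ, hα⟩
      exact ⟨hα.1, hρ, by linarith [Real.pi_pos], hα.2⟩
  have hsign : ∀ p ∈ polarCoord.target,
      ENNReal.ofReal p.1 • {p : ℝ × ℝ | 0 < p.2}.indicator f (polarCoord.symm p) =
        {p : ℝ × ℝ | 0 < p.2}.indicator
          (fun p ↦ ENNReal.ofReal p.1 * f (p.1 * Real.cos p.2, p.1 * Real.sin p.2)) p := by
    rintro ⟨ρ, α⟩ ⟨hρ : 0 < ρ, hα⟩
    rcases le_or_gt α 0 with h | h
    · have : ρ * Real.sin α ≤ 0 := mul_nonpos_of_nonneg_of_nonpos hρ.le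
        (Real.sin_nonpos_of_nonpos_of_neg_pi_le h hα.1.le)
      simp [polarCoord, this, h]
    · have : 0 < ρ * Real.sin α := mul_pos hρ (Real.sin_pos_of_pos_of_lt_pi h hα.2)
      simp [polarCoord, this, h]
  calc ∫⁻ x : ℝ, ∫⁻ y in Ioi (0 : ℝ), f (x, y)
      = ∫⁻ p, {p : ℝ × ℝ | 0 < p.2}.indicator f p := by
        rw [Measure.volume_eq_prod, lintegral_prod _ (hf.indicator hupper).aemeasurable]
        refine lintegral_congr fun x ↦ ?_
        rw [← lintegral_indicator measurableSet_Ioi]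
        rfl
    _ = ∫⁻ p in Ioi (0 : ℝ) ×ˢ Ioo 0 π,
          ENNReal.ofReal p.1 * f (p.1 * Real.cos p.2, p.1 * Real.sin p.2) := by
        rw [← lintegral_comp_polarCoord_symm,
          setLIntegral_congr_fun polarCoord.open_target.measurableSet hsign,
          setLIntegral_indicator hupper, htarget]
    _ = _ := by
        rw [Measure.volume_eq_prod, ← Measure.prod_restrict, lintegral_prod_symm]
        exact Measurable.aemeasurable (by fun_prop)

/-- The length of the side opposite the angle `β` in a Euclidean triangle having a side of
length `r` with adjacent angles `α` and `β`, as given by the law of sines. -/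
noncomputable def sineLawSide (r α β : ℝ) : ℝ :=
  r * Real.sin β / Real.sin (α + β)

variable {r α β : ℝ}

theorem sin_pos_of_triangle_angles (hα : α ∈ Ioo 0 π) (hβ : β ∈ Ioo 0 (π - α)) :
    0 < Real.sin β ∧ 0 < Real.sin (α + β) :=
  ⟨Real.sin_pos_of_mem_Ioo ⟨hβ.1, by linarith [hβ.2, hα.1]⟩,
    Real.sin_pos_of_mem_Ioo ⟨by linarith [hα.1, hβ.1], by linarith [hβ.2]⟩⟩

theorem sineLawSide_pos (hr : 0 < r) (hα : α ∈ Ioo 0 π) (hβ : β ∈ Ioo 0 (π - α)) :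
    0 < sineLawSide r α β := by
  obtain ⟨hsinβ, hsin⟩ := sin_pos_of_triangle_angles hα hβ
  unfold sineLawSide
  positivity

theorem sqrt_sq_mul_cos_add_sq_mul_sin (hr : 0 ≤ r) (α : ℝ) :
    √((r * Real.cos α) ^ 2 + (r * Real.sin α) ^ 2) = r := by
  rw [mul_pow, mul_pow, ← mul_add, Real.cos_sq_add_sin_sq, mul_one, Real.sqrt_sq hr]

theorem sineLawSide_mul_sin : sineLawSide r α β * Real.sin α = sineLawSide r β α * Real.sin β := by
  rw [sineLawSide, sineLawSide, add_comm β α]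
  ring

theorem sub_sineLawSide_mul_cos (h : Real.sin (α + β) ≠ 0) :
    r - sineLawSide r α β * Real.cos α = sineLawSide r β α * Real.cos β := by
  rw [sineLawSide, sineLawSide, add_comm β α]
  field_simp
  rw [Real.sin_add]
  ring

theorem hasDerivAt_sineLawSide (h : Real.sin (α + β) ≠ 0) :
    HasDerivAt (sineLawSide r α) (r * Real.sin α / Real.sin (α + β) ^ 2) β := by
  refine (((Real.hasDerivAt_sin β).const_mul r).div
    ((hasDerivAt_id β).const_add α).sin h).congr_deriv ?_
  have hsin : Real.sin α = Real.sin (α + β) * Real.cos β - Real.cos (α + β) * Real.sin β := by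
    rw [← Real.sin_sub, add_sub_cancel_right]
  rw [hsin, id]
  ring

theorem strictMonoOn_sineLawSide (hr : 0 < r) (hα : α ∈ Ioo 0 π) :
    StrictMonoOn (sineLawSide r α) (Ioo 0 (π - α)) := by
  have hderiv (β) (hβ : β ∈ Ioo 0 (π - α)) :=
    hasDerivAt_sineLawSide (r := r) (sin_pos_of_triangle_angles hα hβ).2.ne'
  refine strictMonoOn_of_deriv_pos (convex_Ioo _ _)
    (fun β hβ ↦ (hderiv β hβ).continuousAt.continuousWithinAt) fun β hβ ↦ ?_
  rw [interior_Ioo] at hβ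
  have hsinα := Real.sin_pos_of_mem_Ioo hα
  have hsin := (sin_pos_of_triangle_angles hα hβ).2
  rw [(hderiv β hβ).deriv]
  positivity

theorem image_sineLawSide (hr : 0 < r) (hα : α ∈ Ioo 0 π) :
    sineLawSide r α '' Ioo 0 (π - α) = Ioi 0 := by
  refine Subset.antisymm (image_subset_iff.2 fun β hβ ↦ sineLawSide_pos hr hα hβ)
    fun ρ (hρ : 0 < ρ) ↦ ?_
  have hsinα := Real.sin_pos_of_mem_Ioo hα
  have hzero : (0 : ℝ) ∈ Ioo (r * Real.sin 0 - ρ * Real.sin (α + 0))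
      (r * Real.sin (π - α) - ρ * Real.sin (α + (π - α))) := by
    simp only [Real.sin_zero, add_zero, Real.sin_pi_sub, add_sub_cancel, Real.sin_pi, mul_zero,
      sub_zero, zero_sub, mem_Ioo, Left.neg_neg_iff]
    exact ⟨mul_pos hρ hsinα, mul_pos hr hsinα⟩
  obtain ⟨β, hβ, hroot⟩ := intermediate_value_Ioo (sub_nonneg.2 hα.2.le)
    (f := fun β ↦ r * Real.sin β - ρ * Real.sin (α + β)) (by fun_prop) hzero
  refine ⟨β, hβ, ?_⟩
  rw [sineLawSide, div_eq_iff (sin_pos_of_triangle_angles hα hβ).2.ne']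
  exact sub_eq_zero.1 hroot

theorem lintegral_Ioi_eq_sineLawSide (hr : 0 < r) (hα : α ∈ Ioo 0 π) (g : ℝ → ℝ≥0∞) :
    ∫⁻ ρ in Ioi (0 : ℝ), g ρ = ∫⁻ β in Ioo 0 (π - α),
      ENNReal.ofReal (r * Real.sin α / Real.sin (α + β) ^ 2) * g (sineLawSide r α β) := by
  rw [← image_sineLawSide hr hα, lintegral_image_eq_lintegral_deriv_mul_of_monotoneOn
    measurableSet_Ioo (fun β hβ ↦ (hasDerivAt_sineLawSide
      (sin_pos_of_triangle_angles hα hβ).2.ne').hasDerivWithinAt)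
    (strictMonoOn_sineLawSide hr hα).monotoneOn]

-- `α` and `β` are the angles at `0` and `ξ` of the triangle with vertices `0`, `ξ`, `η`.
theorem lintegral_norm_norm_sub_eq_triangle {E : Type*} [NormedAddCommGroup E]
    [InnerProductSpace ℝ E] [FiniteDimensional ℝ E] [MeasurableSpace E] [BorelSpace E]
    {n : ℕ} (hE : finrank ℝ E = n + 2) {ξ : E} (hξ : ξ ≠ 0)
    {F : ℝ × ℝ → ℝ≥0∞} (hF : Measurable F) :
    ∫⁻ η, F (‖η‖, ‖ξ - η‖) = ENNReal.ofReal (unitSphereArea (n + 1)) *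
      ∫⁻ α in Ioo 0 π, ∫⁻ β in Ioo 0 (π - α),
        ENNReal.ofReal (‖ξ‖ ^ (n + 2) * (Real.sin α * Real.sin β) ^ (n + 1) /
          Real.sin (α + β) ^ (n + 3)) * F (sineLawSide ‖ξ‖ α β, sineLawSide ‖ξ‖ β α) := by
  have hr : 0 < ‖ξ‖ := norm_pos_iff.2 hξ
  rw [lintegral_norm_norm_sub_eq_upperHalfPlane hE hξ hF,
    lintegral_upperHalfPlane_eq_polar (f := fun p ↦ ENNReal.ofReal (p.2 ^ n) *
      F (√(p.1 ^ 2 + p.2 ^ 2), √((‖ξ‖ - p.1) ^ 2 + p.2 ^ 2))) (by fun_prop)]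
  congr 1
  refine setLIntegral_congr_fun measurableSet_Ioo fun α hα ↦ ?_
  rw [lintegral_Ioi_eq_sineLawSide hr hα]
  refine setLIntegral_congr_fun measurableSet_Ioo fun β hβ ↦ ?_
  have hsinα := Real.sin_pos_of_mem_Ioo hα
  have hsin := (sin_pos_of_triangle_angles hα hβ).2
  have hρ := sineLawSide_pos hr hα hβ
  have hσ : 0 ≤ sineLawSide ‖ξ‖ β α := by
    rw [sineLawSide, add_comm]
    positivity
  have hdist : √((‖ξ‖ - sineLawSide ‖ξ‖ α β * Real.cos α) ^ 2 +
      (sineLawSide ‖ξ‖ α β * Real.sin α) ^ 2) = sineLawSide ‖ξ‖ β α := by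
    rw [sub_sineLawSide_mul_cos hsin.ne', sineLawSide_mul_sin, sqrt_sq_mul_cos_add_sq_mul_sin hσ]
  rw [sqrt_sq_mul_cos_add_sq_mul_sin hρ.le, hdist, ← mul_assoc, ← mul_assoc,
    ← ENNReal.ofReal_mul (by positivity), ← ENNReal.ofReal_mul (by positivity)]
  congr 2
  simp only [sineLawSide, mul_pow, div_pow]
  field_simp
  ring

end TriangleCoordinates

section TriangleSineIntegral

/-- The inner integral of `triangleSineIntegral`: the integral of `sin β ^ b * sin (α + β) ^ c` over
the angles `β` of the triangles whose first angle is `α`. -/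
noncomputable def innerSineIntegral (b c α : ℝ) : ℝ≥0∞ :=
  ∫⁻ β in Ioo 0 (π - α), ENNReal.ofReal (Real.sin β ^ b * Real.sin (α + β) ^ c)

/-- The integral of `sin α ^ a * sin β ^ b * sin γ ^ c` over all shapes of triangles, that is, over
all `α, β, γ > 0` with `α + β + γ = π`. Since `sin γ = sin (α + β)`, only `α` and `β` are used. -/
noncomputable def triangleSineIntegral (a b c : ℝ) : ℝ≥0∞ :=
  ∫⁻ α in Ioo 0 π, ENNReal.ofReal (Real.sin α ^ a) * innerSineIntegral b c α

variable {a b c α : ℝ}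

theorem innerSineIntegral_comm : innerSineIntegral b c α = innerSineIntegral c b α := by
  have hpres := Measure.measurePreserving_sub_left volume (π - α)
  have hreflect := hpres.setLIntegral_comp_preimage_emb
    (MeasurableEquiv.subLeft (π - α)).measurableEmbedding
    (fun β ↦ ENNReal.ofReal (Real.sin β ^ b * Real.sin (α + β) ^ c)) (Ioo 0 (π - α))
  rw [preimage_const_sub_Ioo, sub_self, sub_zero] at hreflect
  rw [innerSineIntegral, innerSineIntegral, ← hreflect]
  refine lintegral_congr fun β ↦ ?_
  rw [show π - α - β = π - (α + β) by ring, show α + (π - (α + β)) = π - β by ring,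
    Real.sin_pi_sub, Real.sin_pi_sub, mul_comm]

theorem two_mul_rpow_midpoint_le {x y : ℝ} (hx : 0 < x) (hy : 0 < y) (b c : ℝ) :
    2 * (x ^ ((b + c) / 2) * y ^ ((b + c) / 2)) ≤ x ^ b * y ^ c + x ^ c * y ^ b := by
  have hsplit {z : ℝ} (hz : 0 < z) : z ^ ((b + c) / 2) = z ^ (b / 2) * z ^ (c / 2) := by
    rw [add_div, Real.rpow_add hz]
  have hsq {z : ℝ} (hz : 0 < z) (t : ℝ) : z ^ t = (z ^ (t / 2)) ^ 2 := by
    rw [← Real.rpow_mul_natCast hz.le, Nat.cast_ofNat, div_mul_cancel₀ t two_ne_zero]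
  rw [hsplit hx, hsplit hy, hsq hx b, hsq hx c, hsq hy b, hsq hy c]
  linarith [two_mul_le_add_sq (x ^ (b / 2) * y ^ (c / 2)) (x ^ (c / 2) * y ^ (b / 2))]

theorem innerSineIntegral_midpoint_le (hα : α ∈ Ioo 0 π) (b c : ℝ) :
    innerSineIntegral ((b + c) / 2) ((b + c) / 2) α ≤ innerSineIntegral b c α := by
  suffices 2 * innerSineIntegral ((b + c) / 2) ((b + c) / 2) α ≤
      innerSineIntegral b c α + innerSineIntegral c b α by
    rw [innerSineIntegral_comm (b := c), ← two_mul] at this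
    exact (ENNReal.mul_le_mul_iff_right two_ne_zero ENNReal.ofNat_ne_top).1 this
  unfold innerSineIntegral
  rw [← lintegral_add_left (by fun_prop), ← lintegral_const_mul' _ _ ENNReal.ofNat_ne_top]
  refine setLIntegral_mono' measurableSet_Ioo fun β hβ ↦ ?_
  obtain ⟨hsinβ, hsin⟩ := sin_pos_of_triangle_angles hα hβ
  rw [← ENNReal.ofReal_add (by positivity) (by positivity), ← ENNReal.ofReal_ofNat 2,
    ← ENNReal.ofReal_mul zero_le_two]
  exact ENNReal.ofReal_le_ofReal (two_mul_rpow_midpoint_le hsinβ hsin b c)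

theorem triangleSineIntegral_midpoint_le (a b c : ℝ) :
    triangleSineIntegral a ((b + c) / 2) ((b + c) / 2) ≤ triangleSineIntegral a b c :=
  setLIntegral_mono' measurableSet_Ioo fun _ hα ↦
    mul_le_mul_right (innerSineIntegral_midpoint_le hα b c) _

theorem intervalIntegrable_sin_rpow_pi_div_two (ha : -1 < a) :
    IntervalIntegrable (fun x ↦ Real.sin x ^ a) volume 0 (π / 2) := by
  have := Real.pi_pos
  refine ((intervalIntegral.intervalIntegrable_rpow' ha).const_mul (1 + (2 / π) ^ a)).mono_fun
    (Measurable.aestronglyMeasurable (by fun_prop)) ?_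
  filter_upwards [ae_restrict_mem measurableSet_uIoc] with x hx
  rw [uIoc_of_le (by positivity)] at hx
  have hx0 := hx.1
  have hsin : 0 < Real.sin x := Real.sin_pos_of_pos_of_lt_pi hx0 (by linarith [hx.2])
  have hpow : 0 < x ^ a := Real.rpow_pos_of_pos hx0 a
  have hconst : 0 < (2 / π) ^ a := by positivity
  rw [Real.norm_of_nonneg (by positivity), Real.norm_of_nonneg (by positivity), one_add_mul]
  rcases le_total 0 a with h | h
  · have := Real.rpow_le_rpow hsin.le (Real.sin_le hx0.le) h
    linarith [mul_pos hconst hpow]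
  · have := Real.rpow_le_rpow_of_nonpos (by positivity) (Real.mul_le_sin hx0.le hx.2) h
    rw [Real.mul_rpow (by positivity) hx0.le] at this
    linarith

theorem integrableOn_sin_rpow (ha : -1 < a) :
    IntegrableOn (fun x ↦ Real.sin x ^ a) (Ioo 0 π) := by
  have hleft := intervalIntegrable_sin_rpow_pi_div_two ha
  have hright : IntervalIntegrable (fun x ↦ Real.sin x ^ a) volume (π / 2) π := by
    simpa [sub_half, Real.sin_pi_sub] using (hleft.comp_sub_left π).symm
  exact (intervalIntegrable_iff_integrableOn_Ioo_of_le Real.pi_nonneg).1 (hleft.trans hright)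

theorem triangleSineIntegral_zero_right_lt_top (ha : -1 < a) (hb : -1 < b) :
    triangleSineIntegral a b 0 < ⊤ := by
  calc triangleSineIntegral a b 0
      ≤ ∫⁻ α in Ioo 0 π, ENNReal.ofReal (Real.sin α ^ a) *
          ∫⁻ β in Ioo 0 π, ENNReal.ofReal (Real.sin β ^ b) := by
        refine setLIntegral_mono' measurableSet_Ioo fun α hα ↦ ?_
        simp only [innerSineIntegral, Real.rpow_zero, mul_one]
        gcongr
        linarith [hα.1]
    _ = (∫⁻ α in Ioo 0 π, ENNReal.ofReal (Real.sin α ^ a)) *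
          ∫⁻ β in Ioo 0 π, ENNReal.ofReal (Real.sin β ^ b) :=
        lintegral_mul_const _ (by fun_prop)
    _ < ⊤ := ENNReal.mul_lt_top (integrableOn_sin_rpow ha).lintegral_lt_top
        (integrableOn_sin_rpow hb).lintegral_lt_top

theorem triangleSineIntegral_self_lt_top (ha : -1 < a) (hb : -1 < 2 * b) :
    triangleSineIntegral a b b < ⊤ := by
  have hmid := triangleSineIntegral_midpoint_le a (2 * b) 0
  rw [add_zero, mul_div_cancel_left₀ b two_ne_zero] at hmid
  exact hmid.trans_lt (triangleSineIntegral_zero_right_lt_top ha hb)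

theorem measurable_setLIntegral_Ioo {f : ℝ × ℝ → ℝ≥0∞} (hf : Measurable f) {u v : ℝ → ℝ}
    (hu : Measurable u) (hv : Measurable v) :
    Measurable fun x ↦ ∫⁻ y in Ioo (u x) (v x), f (x, y) := by
  have hregion : MeasurableSet {p : ℝ × ℝ | p.2 ∈ Ioo (u p.1) (v p.1)} :=
    (measurableSet_lt (by fun_prop) measurable_snd).inter
      (measurableSet_lt measurable_snd (by fun_prop))
  convert (hf.indicator hregion).lintegral_prod_right' (ν := volume) using 2 with x
  rw [← lintegral_indicator measurableSet_Ioo]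
  rfl

theorem measurable_innerSineIntegral : Measurable (innerSineIntegral b c) :=
  measurable_setLIntegral_Ioo
    (f := fun p ↦ ENNReal.ofReal (Real.sin p.2 ^ b * Real.sin (p.1 + p.2) ^ c))
    (by fun_prop) measurable_const (by fun_prop)

theorem integral_sin_rpow_eq_toReal_innerSineIntegral (hα : α ∈ Ioo 0 π) :
    ∫ β in Ioo 0 (π - α), Real.sin β ^ b * Real.sin (α + β) ^ c =
      (innerSineIntegral b c α).toReal := by
  refine integral_eq_lintegral_of_nonneg_ae ?_
    (Measurable.aestronglyMeasurable (by fun_prop))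
  filter_upwards [ae_restrict_mem measurableSet_Ioo] with β hβ
  obtain ⟨hsinβ, hsin⟩ := sin_pos_of_triangle_angles hα hβ
  simp only [Pi.zero_apply]
  positivity

theorem integral_sin_rpow_eq_toReal_triangleSineIntegral (hfin : triangleSineIntegral a b c ≠ ⊤) :
    ∫ α in Ioo 0 π, Real.sin α ^ a *
        ∫ β in Ioo 0 (π - α), Real.sin β ^ b * Real.sin (α + β) ^ c =
      (triangleSineIntegral a b c).toReal := by
  have hmeas : Measurable fun α ↦ ENNReal.ofReal (Real.sin α ^ a) * innerSineIntegral b c α :=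
    Measurable.mul (by fun_prop) measurable_innerSineIntegral
  rw [triangleSineIntegral, ← integral_toReal hmeas.aemeasurable (ae_lt_top hmeas hfin)]
  refine setIntegral_congr_fun measurableSet_Ioo fun α hα ↦ ?_
  have hsinα := Real.sin_pos_of_mem_Ioo hα
  simp only [integral_sin_rpow_eq_toReal_innerSineIntegral hα, ENNReal.toReal_mul,
    ENNReal.toReal_ofReal (Real.rpow_nonneg hsinα.le a)]

theorem integral_sin_mul_sin_rpow_eq_toReal_triangleSineIntegral
    (hfin : triangleSineIntegral a b b ≠ ⊤) :
    ∫ φ₁ in Ioo 0 π, ∫ φ₂ in Ioo 0 (π - φ₁),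
        (Real.sin φ₂ * Real.sin (φ₁ + φ₂)) ^ b * Real.sin φ₁ ^ a =
      (triangleSineIntegral a b b).toReal := by
  rw [← integral_sin_rpow_eq_toReal_triangleSineIntegral hfin]
  refine setIntegral_congr_fun measurableSet_Ioo fun φ₁ hφ₁ ↦ ?_
  simp only [integral_mul_const, mul_comm (Real.sin φ₁ ^ a)]
  congr 1
  refine setIntegral_congr_fun measurableSet_Ioo fun φ₂ hφ₂ ↦ ?_
  obtain ⟨hsin₂, hsin⟩ := sin_pos_of_triangle_angles hφ₁ hφ₂
  exact Real.mul_rpow hsin₂.le hsin.le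

end TriangleSineIntegral

section Moments

theorem triangle_jacobian_mul_rpow (n : ℕ) (p q : ℝ) {r A B C : ℝ} (hr : 0 < r) (hA : 0 < A)
    (hB : 0 < B) (hC : 0 < C) :
    r ^ (n + 2) * (A * B) ^ (n + 1) / C ^ (n + 3) * ((r * B / C) ^ p * (r * A / C) ^ q) =
      r ^ (p + q + n + 2) * (A ^ (q + n + 1) * (B ^ (p + n + 1) * C ^ (-(p + q + n + 3)))) := by
  -- In exponential form the identity of powers becomes linear arithmetic on exponents.
  have hexp {z : ℝ} (hz : 0 < z) : ∃ x, z = Real.exp x := ⟨Real.log z, (Real.exp_log hz).symm⟩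
  obtain ⟨r, rfl⟩ := hexp hr
  obtain ⟨A, rfl⟩ := hexp hA
  obtain ⟨B, rfl⟩ := hexp hB
  obtain ⟨C, rfl⟩ := hexp hC
  simp only [← Real.rpow_natCast, ← Real.exp_add, ← Real.exp_sub, ← Real.exp_mul]
  push_cast
  ring_nf

theorem lintegral_norm_rpow_mul_norm_sub_rpow {E : Type*} [NormedAddCommGroup E]
    [InnerProductSpace ℝ E] [FiniteDimensional ℝ E] [MeasurableSpace E] [BorelSpace E]
    {n : ℕ} (hE : finrank ℝ E = n + 2) {ξ : E} (hξ : ξ ≠ 0) (p q : ℝ) :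
    ∫⁻ η, ENNReal.ofReal (‖η‖ ^ p * ‖ξ - η‖ ^ q) =
      ENNReal.ofReal (unitSphereArea (n + 1) * ‖ξ‖ ^ (p + q + n + 2)) *
        triangleSineIntegral (q + n + 1) (p + n + 1) (-(p + q + n + 3)) := by
  have hr : 0 < ‖ξ‖ := norm_pos_iff.2 hξ
  rw [lintegral_norm_norm_sub_eq_triangle hE hξ
    (F := fun x ↦ ENNReal.ofReal (x.1 ^ p * x.2 ^ q)) (by fun_prop),
    ENNReal.ofReal_mul (unitSphereArea_pos (by positivity)).le, mul_assoc]
  congr 1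
  rw [triangleSineIntegral, ← lintegral_const_mul' _ _ ENNReal.ofReal_ne_top]
  refine setLIntegral_congr_fun measurableSet_Ioo fun α hα ↦ ?_
  simp only [innerSineIntegral, ← lintegral_const_mul' _ _ ENNReal.ofReal_ne_top]
  refine setLIntegral_congr_fun measurableSet_Ioo fun β hβ ↦ ?_
  have hsinα := Real.sin_pos_of_mem_Ioo hα
  obtain ⟨hsinβ, hsin⟩ := sin_pos_of_triangle_angles hα hβ
  simp only [sineLawSide, add_comm β α]
  rw [← ENNReal.ofReal_mul (by positivity), ← ENNReal.ofReal_mul (by positivity),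
    ← ENNReal.ofReal_mul (by positivity), triangle_jacobian_mul_rpow n p q hr hsinα hsinβ hsin]

variable {d : ℕ} {γ : ℝ}

theorem Cbar_eq_unitSphereArea_mul_cdg (d : ℕ) (γ : ℝ) :
    Cbar d γ = unitSphereArea (d - 1) * cdg d γ := by
  have hpow : π ^ (-(d : ℝ) / 2) = (√π)⁻¹ * (π ^ (((d : ℝ) - 1) / 2))⁻¹ := by
    rw [Real.sqrt_eq_rpow, ← Real.rpow_neg Real.pi_nonneg, ← Real.rpow_neg Real.pi_nonneg,
      ← Real.rpow_add Real.pi_pos]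
    ring_nf
  have hne : π ^ (((d : ℝ) - 1) / 2) ≠ 0 := (Real.rpow_pos_of_pos Real.pi_pos _).ne'
  rw [Cbar, unitSphereArea, cdg, hpow, show ((d : ℝ) + 1) / 2 - γ = (d + 1 - 2 * γ) / 2 by ring]
  field_simp

theorem cdg_nonneg (hγ : γ ∈ Ioo (1 / 2) (((d : ℝ) + 2) / 4)) : 0 ≤ cdg d γ := by
  have hΓ₁ : 0 < Real.Gamma (2 * γ - 1) := Real.Gamma_pos_of_pos (by linarith [hγ.1])
  have hΓ₂ : 0 < Real.Gamma (((d : ℝ) + 2 - 4 * γ) / 2) :=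
    Real.Gamma_pos_of_pos (by linarith [hγ.2])
  unfold cdg
  positivity

theorem ratio_rpow_mul_Hker {η ξ : EuclideanSpace ℝ (Fin d)} (hη : η ≠ 0) (hξ : ξ ≠ 0) (b : ℝ) :
    (‖η‖ / ‖ξ‖) ^ b * Hker d γ η ξ = cdg d γ * ‖ξ‖ ^ (d + 2 - 4 * γ - b) *
      (‖η‖ ^ (b + 2 * γ - d - 1) * ‖ξ - η‖ ^ (2 * γ - d - 1)) := by
  have hξ' := norm_pos_iff.2 hξ
  rw [Hker, Real.div_rpow (norm_nonneg η) (norm_nonneg ξ), Real.rpow_sub hξ' _ b,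
    show b + 2 * γ - d - 1 = b + (2 * γ - d - 1) by ring, Real.rpow_add (norm_pos_iff.2 hη)]
  ring

theorem lintegral_ratio_rpow_mul_Hker (hd : 2 ≤ d) (hγ : γ ∈ Ioo (1 / 2) (((d : ℝ) + 2) / 4))
    {ξ : EuclideanSpace ℝ (Fin d)} (hξ : ξ ≠ 0) (b : ℝ) :
    ∫⁻ η, ENNReal.ofReal ((‖η‖ / ‖ξ‖) ^ b * Hker d γ η ξ) = ENNReal.ofReal (Cbar d γ) *
      triangleSineIntegral (2 * γ - 2) (b + 2 * γ - 2) (d + 1 - 4 * γ - b) := by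
  obtain ⟨n, rfl⟩ := Nat.exists_eq_add_of_le' hd
  have hc : 0 ≤ cdg (n + 2) γ := cdg_nonneg hγ
  have hr : 0 < ‖ξ‖ := norm_pos_iff.2 hξ
  have hmoment := lintegral_norm_rpow_mul_norm_sub_rpow (n := n) (by simp) hξ
    (b + 2 * γ - (n + 2 : ℕ) - 1) (2 * γ - (n + 2 : ℕ) - 1)
  have hconst : cdg (n + 2) γ * ‖ξ‖ ^ ((n + 2 : ℕ) + 2 - 4 * γ - b) *
      (unitSphereArea (n + 1) *
        ‖ξ‖ ^ (b + 2 * γ - (n + 2 : ℕ) - 1 + (2 * γ - (n + 2 : ℕ) - 1) + n + 2)) =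
      Cbar (n + 2) γ := by
    rw [mul_mul_mul_comm, ← Real.rpow_add hr, Cbar_eq_unitSphereArea_mul_cdg]
    push_cast
    ring_nf
    simp
  calc ∫⁻ η, ENNReal.ofReal ((‖η‖ / ‖ξ‖) ^ b * Hker (n + 2) γ η ξ)
      = ∫⁻ η, ENNReal.ofReal (cdg (n + 2) γ * ‖ξ‖ ^ ((n + 2 : ℕ) + 2 - 4 * γ - b)) *
          ENNReal.ofReal (‖η‖ ^ (b + 2 * γ - (n + 2 : ℕ) - 1) *
            ‖ξ - η‖ ^ (2 * γ - (n + 2 : ℕ) - 1)) := by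
        refine lintegral_congr_ae ?_
        filter_upwards [compl_mem_ae_iff.2 (measure_singleton 0)] with η hη
        rw [ratio_rpow_mul_Hker hη hξ, ENNReal.ofReal_mul (by positivity)]
    _ = _ := by
        rw [lintegral_const_mul' _ _ ENNReal.ofReal_ne_top, hmoment, ← mul_assoc,
          ← ENNReal.ofReal_mul (by positivity), hconst]
        push_cast
        ring_nf

end Moments

theorem stmt7_general (d : ℕ) (hd : 2 ≤ d) (γ : ℝ)
    (hγ : γ ∈ Ioo (1 / 2) (((d : ℝ) + 2) / 4))
    (ξ : EuclideanSpace ℝ (Fin d)) (hξ : ξ ≠ 0) :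
    (∀ b : ℝ,
      ∫⁻ η, ENNReal.ofReal ((‖η‖ / ‖ξ‖) ^ (((d : ℝ) + 3) / 2 - 3 * γ) * Hker d γ η ξ) ≤
        ∫⁻ η, ENNReal.ofReal ((‖η‖ / ‖ξ‖) ^ b * Hker d γ η ξ)) ∧
    ∫⁻ η, ENNReal.ofReal ((‖η‖ / ‖ξ‖) ^ (((d : ℝ) + 3) / 2 - 3 * γ) * Hker d γ η ξ) =
      ENNReal.ofReal (Cbar d γ *
        ∫ φ₁ in Ioo 0 π, ∫ φ₂ in Ioo 0 (π - φ₁),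
          (Real.sin φ₂ * Real.sin (φ₁ + φ₂)) ^ (((d : ℝ) - 1) / 2 - γ) *
            Real.sin φ₁ ^ (2 * γ - 2)) := by
  have hd' : (2 : ℝ) ≤ d := by exact_mod_cast hd
  set e := ((d : ℝ) - 1) / 2 - γ with he
  have hstar := lintegral_ratio_rpow_mul_Hker hd hγ hξ (((d : ℝ) + 3) / 2 - 3 * γ)
  rw [show ((d : ℝ) + 3) / 2 - 3 * γ + 2 * γ - 2 = e by ring,
    show (d : ℝ) + 1 - 4 * γ - (((d : ℝ) + 3) / 2 - 3 * γ) = e by ring] at hstar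
  rw [hstar]
  constructor
  · intro b
    have hmid := triangleSineIntegral_midpoint_le (2 * γ - 2) (b + 2 * γ - 2) (d + 1 - 4 * γ - b)
    rw [show (b + 2 * γ - 2 + (d + 1 - 4 * γ - b)) / 2 = e by ring] at hmid
    rw [lintegral_ratio_rpow_mul_Hker hd hγ hξ b]
    gcongr
  · have hfin : triangleSineIntegral (2 * γ - 2) e e ≠ ⊤ :=
      (triangleSineIntegral_self_lt_top (by linarith [hγ.1]) (by linarith [hγ.2])).ne
    have hC : 0 ≤ Cbar d γ := by
      rw [Cbar_eq_unitSphereArea_mul_cdg]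
      exact mul_nonneg (unitSphereArea_pos (by linarith)).le (cdg_nonneg hγ)
    rw [integral_sin_mul_sin_rpow_eq_toReal_triangleSineIntegral hfin, ENNReal.ofReal_mul hC,
      ENNReal.ofReal_toReal hfin]

theorem stmt7 (d : ℕ) (hd : 2 ≤ d) (γ : ℝ)
    (hγ : γ ∈ Set.Ioo (1/2 : ℝ) (((d : ℝ) + 3)/6))
    (ξ : EuclideanSpace ℝ (Fin d)) (hξ : ξ ≠ 0) :
    (∀ b : ℝ, 0 < b →
      ∫⁻ η, ENNReal.ofReal ((‖η‖ / ‖ξ‖) ^ (((d : ℝ) + 3)/2 - 3*γ) * Hker d γ η ξ) ≤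
        ∫⁻ η, ENNReal.ofReal ((‖η‖ / ‖ξ‖) ^ b * Hker d γ η ξ)) ∧
    ∫⁻ η, ENNReal.ofReal ((‖η‖ / ‖ξ‖) ^ (((d : ℝ) + 3)/2 - 3*γ) * Hker d γ η ξ) =
      ENNReal.ofReal (Cbar d γ *
        ∫ φ₁ in Set.Ioo (0 : ℝ) Real.pi, ∫ φ₂ in Set.Ioo (0 : ℝ) (Real.pi - φ₁),
          (Real.sin φ₂ * Real.sin (φ₁ + φ₂)) ^ (((d : ℝ) - 1)/2 - γ)
            * (Real.sin φ₁) ^ (2*γ - 2)) :=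
  (stmt7_general d hd γ ⟨hγ.1, by linarith [hγ.2, d.cast_nonneg (α := ℝ)]⟩ ξ hξ).imp_left
    fun hmin b _ ↦ hmin b
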